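/- Assume Z_i > 0 almost surely for all i (hence Y*_i > 0 a.s.). Define the multiplicative Doob decomposition Y*_j = Y*_0 · N*_j · B*_j, where N*_j = Π_{l=1}^{j} Y*_l / E[Y*_l | 𝓕_{l−1}] and B*_j = Π_{l=1}^{j} E[Y*_l | 𝓕_{l−1}] / Y*_{l−1}. Then the process S_j := (N*_j − 1) Y*_0 is a martingale multiple satisfying Z_j − Y*_0 ≤ S_j almost surely for all 1 ≤ j ≤ T, and consequently Y*_0 = max_{0≤j≤T} (Z_j − S_j) almost surely. -/

import Mathlib

/-!
Write `c l` for `E[Y l | 𝓕 (l-1)]`. The first assertion amounts to `Z j ≤ Y 0 * Nstar j`. Since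
`c (j+1) ≤ Y j`, the product `Y 0 * Nstar j` dominates `Y j` by induction (this says that the
predictable factor `Bstar` is at most `1`), and `Y j ≥ Z j`. For the second assertion, follow a path
up to the first time `j` at which `Y j = Z j`, which exists because `Y T = Z T`. Before that time
`Y i = c (i+1)`, so `Bstar` is still equal to `1` and `Z j = Y j = Y 0 * Nstar j`: the bound is
attained at `j`.

Both inductions are pathwise (`snell_path_le`, `snell_path_attained`). The only probabilistic input
is that each `c l` is a.s. strictly positive, so that the quotients are genuine
(`condExp_pos_of_ae_pos`).
-/

open MeasureTheory Filter Finset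

theorem condExp_pos_of_ae_pos {Ω : Type*} {m m0 : MeasurableSpace Ω} {μ : Measure Ω}
    [IsProbabilityMeasure μ] (hm : m ≤ m0) {f : Ω → ℝ} (hf : Integrable f μ)
    (hpos : ∀ᵐ ω ∂μ, 0 < f ω) : ∀ᵐ ω ∂μ, 0 < (μ[f|m]) ω := by
  -- On the `m`-measurable set where the conditional expectation is nonpositive,
  -- the integral of `f` is nonpositive, which forces that set to be null.
  have hA : MeasurableSet[m] {ω | (μ[f|m]) ω ≤ 0} :=
    measurableSet_le stronglyMeasurable_condExp.measurable measurable_const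
  have hA0 := hm _ hA
  have h1 : ∫ ω in {ω | (μ[f|m]) ω ≤ 0}, f ω ∂μ ≤ 0 := by
    rw [← setIntegral_condExp hm hf hA]
    exact setIntegral_nonpos hA0 fun ω hω => hω
  have h2 : 0 ≤ᵐ[μ.restrict {ω | (μ[f|m]) ω ≤ 0}] f :=
    ae_restrict_of_ae (hpos.mono fun ω h => h.le)
  have h3 := (integral_eq_zero_iff_of_nonneg_ae h2 hf.integrableOn).1
    (le_antisymm h1 (integral_nonneg_of_ae h2))
  filter_upwards [hpos, (ae_restrict_iff' hA0).1 h3] with ω hω h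
  by_contra hc
  exact hω.ne' (h (not_lt.1 hc))

/-- Pathwise form of `Bstar ≤ 1`. -/
theorem snell_path_le {T : ℕ} {y c : ℕ → ℝ} (hy : ∀ i ≤ T, 0 < y i)
    (hc : ∀ i < T, 0 < c (i + 1)) (hle : ∀ i < T, c (i + 1) ≤ y i) (j : ℕ) (hj : j ≤ T) :
    y j ≤ y 0 * ∏ l ∈ Finset.Icc 1 j, (y l / c l) := by
  induction j with
  | zero => simp
  | succ j ih =>
    rw [Finset.prod_Icc_succ_top (by omega), ← mul_assoc]
    have h1 := hc j hj
    calc y (j + 1) = c (j + 1) * (y (j + 1) / c (j + 1)) := by field_simp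
      _ ≤ _ := mul_le_mul_of_nonneg_right ((hle j hj).trans (ih (by omega)))
        (div_pos (hy _ hj) h1).le

/-- Along a path the reward equals `Y 0 * Nstar` at some time, namely at the first time the Snell
envelope meets the reward. -/
theorem snell_path_attained {T : ℕ} {y z c : ℕ → ℝ} (hT : y T = z T)
    (hc : ∀ i < T, 0 < c (i + 1)) (hrec : ∀ i < T, y i = max (z i) (c (i + 1))) :
    ∃ j ≤ T, z j = y 0 * ∏ l ∈ Finset.Icc 1 j, (y l / c l) := by
  by_contra! hne
  have key : ∀ j ≤ T, y j = y 0 * ∏ l ∈ Finset.Icc 1 j, (y l / c l) := by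
    intro j hj
    induction j with
    | zero => simp
    | succ j ih =>
      have ihj := ih (by omega)
      have hcj : y j = c (j + 1) := by
        rcases max_choice (z j) (c (j + 1)) with h | h
        · exact absurd ((h.symm.trans (hrec j hj).symm).trans ihj) (hne j (by omega))
        · exact (hrec j hj).trans h
      have h1 := hc j hj
      rw [Finset.prod_Icc_succ_top (by omega), ← mul_assoc, ← ihj, hcj]
      field_simp
  exact hne T le_rfl (hT ▸ key T le_rfl)

/-- **The multiplicative-Doob dual.**
Assume `Z i > 0` a.s. for all `i ≤ T` (hence `Y i > 0` a.s.). With the multiplicative Doob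
decomposition of the Snell envelope, `Nstar j = ∏_{l=1}^{j} Y l / E[Y l | 𝓕 (l-1)]`, the process
`S j = (Nstar j - 1) * Y 0` satisfies `Z j - Y 0 ≤ S j` a.s. for all `1 ≤ j ≤ T`, and
consequently `Y 0 = max_{0 ≤ j ≤ T} (Z j - S j)` a.s. -/
theorem snell_eq_dual_max_multiplicative_doob
    {Ω : Type*} {m0 : MeasurableSpace Ω} (μ : Measure Ω) [IsProbabilityMeasure μ]
    (T : ℕ) (𝓕 : Filtration ℕ m0) (Z Y Nstar S : ℕ → Ω → ℝ)
    -- `Z` is adapted, a.s. (strictly) positive and integrable on the horizon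
    (hZadp : ∀ i, i ≤ T → StronglyMeasurable[𝓕 i] (Z i))
    (hZpos : ∀ i, i ≤ T → ∀ᵐ ω ∂μ, 0 < Z i ω)
    (hZint : ∀ i, i ≤ T → Integrable (Z i) μ)
    -- `Y` is the Snell envelope of `Z`, given by backward recursion
    (hYT : Y T = Z T)
    (hYrec : ∀ i, i < T → Y i =ᵐ[μ] fun ω => max (Z i ω) ((μ[Y (i + 1)|𝓕 i]) ω))
    -- `Nstar` is the martingale part of the multiplicative Doob decomposition of `Y`
    (hNstar : ∀ j, Nstar j = fun ω => ∏ l ∈ Finset.Icc 1 j, (Y l ω / (μ[Y l|𝓕 (l - 1)]) ω))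
    -- `S` is the corresponding martingale multiple
    (hSdef : ∀ j, S j = fun ω => (Nstar j ω - 1) * Y 0 ω) :
    (∀ j, 1 ≤ j → j ≤ T → (fun ω => Z j ω - Y 0 ω) ≤ᵐ[μ] S j) ∧
    (Y 0 =ᵐ[μ]
      fun ω => (Finset.Icc 0 T).sup' (Finset.nonempty_Icc.mpr (Nat.zero_le T))
        (fun j => Z j ω - S j ω)) := by
  have hYint : ∀ i, i ≤ T → Integrable (Y i) μ := by
    intro i hi
    rcases hi.lt_or_eq with h | rfl
    · exact ((hZint i hi).sup integrable_condExp).congr (hYrec i h).symm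
    · exact hYT ▸ hZint i le_rfl
  have hYge : ∀ i, i ≤ T → ∀ᵐ ω ∂μ, Z i ω ≤ Y i ω := by
    intro i hi
    rcases hi.lt_or_eq with h | rfl
    · filter_upwards [hYrec i h] with ω hω
      exact hω ▸ le_max_left _ _
    · exact .of_forall fun ω => (congrFun hYT ω).ge
  have hYpos : ∀ i, i ≤ T → ∀ᵐ ω ∂μ, 0 < Y i ω := by
    intro i hi
    filter_upwards [hZpos i hi, hYge i hi] with ω h1 h2 using h1.trans_le h2
  have hcpos : ∀ i, i < T → ∀ᵐ ω ∂μ, 0 < (μ[Y (i + 1)|𝓕 i]) ω := fun i hi =>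
    condExp_pos_of_ae_pos (𝓕.le i) (hYint _ hi) (hYpos _ hi)
  have hall : ∀ᵐ ω ∂μ, (∀ j ≤ T, Z j ω - S j ω ≤ Y 0 ω) ∧ ∃ j ≤ T, Z j ω - S j ω = Y 0 ω := by
    have e1 : ∀ᵐ ω ∂μ, ∀ i, i ≤ T → Z i ω ≤ Y i ω :=
      ae_all_iff.2 fun i => eventually_imp_distrib_left.2 (hYge i)
    have e2 : ∀ᵐ ω ∂μ, ∀ i, i ≤ T → 0 < Y i ω :=
      ae_all_iff.2 fun i => eventually_imp_distrib_left.2 (hYpos i)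
    have e3 : ∀ᵐ ω ∂μ, ∀ i, i < T → 0 < (μ[Y (i + 1)|𝓕 i]) ω :=
      ae_all_iff.2 fun i => eventually_imp_distrib_left.2 (hcpos i)
    have e4 : ∀ᵐ ω ∂μ, ∀ i, i < T → Y i ω = max (Z i ω) ((μ[Y (i + 1)|𝓕 i]) ω) :=
      ae_all_iff.2 fun i => eventually_imp_distrib_left.2 (hYrec i)
    filter_upwards [e1, e2, e3, e4] with ω h1 h2 h3 h4
    have hle := snell_path_le (T := T) (y := fun i => Y i ω)
      (c := fun l => (μ[Y l|𝓕 (l - 1)]) ω) h2 h3 fun i hi => (h4 i hi).symm ▸ le_max_right _ _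
    obtain ⟨j, hj, hjeq⟩ := snell_path_attained (T := T) (y := fun i => Y i ω)
      (z := fun i => Z i ω) (c := fun l => (μ[Y l|𝓕 (l - 1)]) ω) (congrFun hYT ω) h3 h4
    refine ⟨fun i hi => ?_, j, hj, ?_⟩
    · have := hle i hi
      have := h1 i hi
      simp only [hSdef, hNstar]
      linarith
    · simp only [hSdef, hNstar]
      linarith
  refine ⟨fun j _ hj => ?_, ?_⟩
  · filter_upwards [hall] with ω h
    linarith [h.1 j hj]
  · filter_upwards [hall] with ω ⟨hle, j, hj, hjeq⟩
    refine le_antisymm ?_ (Finset.sup'_le _ _ fun i hi => hle i (Finset.mem_Icc.1 hi).2)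
    exact hjeq ▸ Finset.le_sup' (fun j => Z j ω - S j ω)
      (Finset.mem_Icc.2 ⟨Nat.zero_le j, hj⟩)
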